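/- (Riemann's theorem for graphs with loops) Let G be a connected graph of genus g = |E(G)| − |V(G)| + 1, possibly with loops. If D ∈ Div(G) has deg D ≥ 2g − 1, then r#_G(D) = deg D − g. -/

import Mathlib

/-- A finite multigraph: vertices `V`, edges `E`, each edge has an (arbitrarily
ordered) pair of endpoints.  Loops are edges whose two endpoints coincide. -/
structure Multigraph where
  V : Type
  E : Type
  [decV : DecidableEq V]
  [fintV : Fintype V]
  [decE : DecidableEq E]
  [fintE : Fintype E]
  ends : E → V × V

attribute [instance] Multigraph.decV Multigraph.fintV Multigraph.decE Multigraph.fintE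

namespace Multigraph

variable (G : Multigraph)

/-- Two vertices are adjacent if some edge joins them. -/
def Adj (v w : G.V) : Prop := ∃ e : G.E, G.ends e = (v, w) ∨ G.ends e = (w, v)

/-- A multigraph is connected if it is nonempty and any two vertices are joined by a walk. -/
def Connected : Prop := Nonempty G.V ∧ ∀ v w : G.V, Relation.ReflTransGen G.Adj v w

/-- The number of edges joining `v` and `w`. -/
def numEdges (v w : G.V) : ℕ :=
  (Finset.univ.filter fun e : G.E => G.ends e = (v, w) ∨ G.ends e = (w, v)).card

/-- The number of loops based at `v`. -/
def numLoops (v : G.V) : ℕ :=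
  (Finset.univ.filter fun e : G.E => G.ends e = (v, v)).card

/-- The valency of `v` (loops count twice). -/
def valency (v : G.V) : ℕ :=
  ∑ e : G.E, ((if (G.ends e).1 = v then 1 else 0) + (if (G.ends e).2 = v then 1 else 0))

/-- The intersection product on vertices: `(v·w)` is the number of edges joining `v` and
`w` when `v ≠ w`, and `(v·v) = -val(v) + 2 loop(v)`. -/
def inter (v w : G.V) : ℤ :=
  if v = w then -(G.valency v : ℤ) + 2 * (G.numLoops v : ℤ) else (G.numEdges v w : ℤ)

/-- The principal divisor `T_v = Σ_w (v·w) w`. -/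
def T (v : G.V) : G.V → ℤ := fun w => G.inter v w

/-- The group of principal divisors, generated by the `T_v`. -/
def Prin : AddSubgroup (G.V → ℤ) := AddSubgroup.closure (Set.range G.T)

/-- The Jacobian group `Div(G)/Prin(G)`. -/
abbrev Jac := (G.V → ℤ) ⧸ G.Prin

/-- A divisor is effective if all its coefficients are nonnegative. -/
def Effective {α : Type} (D : α → ℤ) : Prop := ∀ v, 0 ≤ D v

/-- The degree of a divisor. -/
def degree {α : Type} [Fintype α] (D : α → ℤ) : ℤ := ∑ v, D v

/-- The Baker–Norine rank of a divisor: `-1` if no effective divisor is linearly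
equivalent to `D`, and otherwise the largest `k ≥ 0` such that for every effective
divisor `E` of degree `k` some effective divisor is linearly equivalent to `D - E`. -/
noncomputable def rank (D : G.V → ℤ) : ℤ :=
  sSup {r : ℤ | r = -1 ∨ (0 ≤ r ∧ ∀ E : G.V → ℤ, Effective E → degree E = r →
      ∃ F : G.V → ℤ, Effective F ∧ D - E - F ∈ G.Prin)}

/-- An edge is a loop if its two endpoints coincide. -/
def IsLoop (e : G.E) : Prop := (G.ends e).1 = (G.ends e).2

/-- The refinement of `G` obtained by inserting `n e` new vertices in the interior of
each edge `e` (subdividing `e` into `n e + 1` edges). -/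
def subdivide (n : G.E → ℕ) : Multigraph where
  V := G.V ⊕ (Σ e : G.E, Fin (n e))
  E := Σ e : G.E, Fin (n e + 1)
  ends := fun x =>
    (if h : (x.2 : ℕ) = 0 then Sum.inl (G.ends x.1).1
        else Sum.inr ⟨x.1, ⟨(x.2 : ℕ) - 1, by have := x.2.isLt; omega⟩⟩,
     if h : (x.2 : ℕ) = n x.1 then Sum.inl (G.ends x.1).2
        else Sum.inr ⟨x.1, ⟨(x.2 : ℕ), by have := x.2.isLt; omega⟩⟩)

/-- The natural map `σ* : Div(G) → Div(G̃)` to a refinement, extending a divisor by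
zero on the new vertices. -/
def subdivMap (n : G.E → ℕ) (D : G.V → ℤ) : (G.subdivide n).V → ℤ := Sum.elim D 0

/-- `Ĝ`: the loopless refinement obtained by inserting one new vertex in the interior of
every loop-edge. -/
def hat : Multigraph := G.subdivide fun e => if (G.ends e).1 = (G.ends e).2 then 1 else 0

/-- The rank `r#_G(D) := r_{Ĝ}(σ* D)`. -/
noncomputable def rankSharp (D : G.V → ℤ) : ℤ :=
  G.hat.rank (G.subdivMap (fun e => if (G.ends e).1 = (G.ends e).2 then 1 else 0) D)

/-- A multigraph is loopless if no edge is a loop. -/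
def Loopless : Prop := ∀ e : G.E, (G.ends e).1 ≠ (G.ends e).2

/-- The genus (first Betti number) `g = |E| - |V| + 1` of a connected graph. -/
def genus : ℤ := (Fintype.card G.E : ℤ) - (Fintype.card G.V : ℤ) + 1

/-- The canonical divisor `K#_G = Σ_v (val(v) - 2) v`. -/
def canonical : G.V → ℤ := fun v => (G.valency v : ℤ) - 2

/-- The loopless graph obtained from `G` by removing all loop-edges. -/
def removeLoops : Multigraph where
  V := G.V
  E := {e : G.E // (G.ends e).1 ≠ (G.ends e).2}
  ends := fun e => G.ends e.1

/-- The virtual graph `G^ω` of a weighted graph `(G, ω)`: attach `ω v` loops at each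
vertex `v`. -/
def virt (w : G.V → ℕ) : Multigraph where
  V := G.V
  E := G.E ⊕ (Σ v : G.V, Fin (w v))
  ends := Sum.elim G.ends fun p => (p.1, p.1)

/-- The rank of a divisor on the weighted graph `(G, ω)`: `r_{(G,ω)}(D) := r#_{G^ω}(D)`. -/
noncomputable def rankW (w : G.V → ℕ) (D : G.V → ℤ) : ℤ := (G.virt w).rankSharp D

/-- The canonical divisor of the weighted graph `(G, ω)`. -/
def canonicalW (w : G.V → ℕ) : G.V → ℤ := fun v => (G.valency v : ℤ) + 2 * (w v : ℤ) - 2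

/-- The genus of the weighted graph `(G, ω)`: `b₁(G) + Σ_v ω(v)`. -/
def genusW (w : G.V → ℕ) : ℤ := G.genus + ∑ v, (w v : ℤ)

/-- The rose `R_g`: one vertex and `g` loop-edges. -/
def rose (g : ℕ) : Multigraph where
  V := Unit
  E := Fin g
  ends := fun _ => ((), ())

/-- The subgraph of `G` determined by a set of vertices and a set of edges with
endpoints among them. -/
def subgraph (Vs : Finset G.V) (Es : Finset G.E)
    (h : ∀ e ∈ Es, (G.ends e).1 ∈ Vs ∧ (G.ends e).2 ∈ Vs) : Multigraph where
  V := {x : G.V // x ∈ Vs}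
  E := {e : G.E // e ∈ Es}
  ends := fun e => (⟨(G.ends e.1).1, (h e.1 e.2).1⟩, ⟨(G.ends e.1).2, (h e.1 e.2).2⟩)

/-- Extension of a divisor on a subgraph by zero: `ι_* : Div(H) → Div(G)`. -/
def iota (Vs : Finset G.V) (D : {x : G.V // x ∈ Vs} → ℤ) : G.V → ℤ :=
  fun x => if h : x ∈ Vs then D ⟨x, h⟩ else 0

end Multigraph

namespace Multigraph

/-- A decomposition `G = H₁ ∨ H₂` of `G` associated to a cut vertex `v`:  `H₁`, `H₂` are
connected subgraphs with `V(H₁) ∩ V(H₂) = {v}`, `E(H₁) ∩ E(H₂) = ∅`, covering `G`. -/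
structure Wedge (G : Multigraph) where
  v : G.V
  V1 : Finset G.V
  V2 : Finset G.V
  hv1 : v ∈ V1
  hv2 : v ∈ V2
  E1 : Finset G.E
  E2 : Finset G.E
  cover_V : V1 ∪ V2 = Finset.univ
  inter_V : V1 ∩ V2 = {v}
  cover_E : E1 ∪ E2 = Finset.univ
  disj_E : E1 ∩ E2 = ∅
  ends1 : ∀ e ∈ E1, (G.ends e).1 ∈ V1 ∧ (G.ends e).2 ∈ V1
  ends2 : ∀ e ∈ E2, (G.ends e).1 ∈ V2 ∧ (G.ends e).2 ∈ V2
  conn1 : (G.subgraph V1 E1 ends1).Connected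
  conn2 : (G.subgraph V2 E2 ends2).Connected

/-- The first subgraph `H₁` of a wedge decomposition. -/
def Wedge.H1 {G : Multigraph} (W : G.Wedge) : Multigraph := G.subgraph W.V1 W.E1 W.ends1

/-- The second subgraph `H₂` of a wedge decomposition. -/
def Wedge.H2 {G : Multigraph} (W : G.Wedge) : Multigraph := G.subgraph W.V2 W.E2 W.ends2

variable (G : Multigraph)

/-- The divisor `div(f)` of an integer-valued function `f` on the vertices
(loops contribute zero). -/
def divOf (f : G.V → ℤ) : G.V → ℤ := fun v =>
  ∑ e : G.E, ((if (G.ends e).1 = v then f v - f (G.ends e).2 else 0)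
            + (if (G.ends e).2 = v then f v - f (G.ends e).1 else 0))

/-- An isomorphism of multigraphs (edges may be matched with either orientation). -/
structure Iso (G H : Multigraph) where
  vEquiv : G.V ≃ H.V
  eEquiv : G.E ≃ H.E
  compat : ∀ e : G.E,
    H.ends (eEquiv e) = (vEquiv (G.ends e).1, vEquiv (G.ends e).2) ∨
    H.ends (eEquiv e) = (vEquiv (G.ends e).2, vEquiv (G.ends e).1)

end Multigraph

namespace Multigraph

lemma divOf_add (G : Multigraph) (f h : G.V → ℤ) : G.divOf (f + h) = G.divOf f + G.divOf h := by
  funext v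
  simp only [divOf, Pi.add_apply, ← Finset.sum_add_distrib]
  refine Finset.sum_congr rfl fun e _ => ?_
  split_ifs <;> ring

lemma divOf_smul (G : Multigraph) (c : ℤ) (f : G.V → ℤ) :
    G.divOf (fun v => c * f v) = fun v => c * G.divOf f v := by
  funext v
  simp only [divOf, Finset.mul_sum]
  refine Finset.sum_congr rfl fun e _ => ?_
  split_ifs <;> ring

/-- `divOf` as a homomorphism. -/
def divHom (G : Multigraph) : (G.V → ℤ) →+ (G.V → ℤ) :=
  AddMonoidHom.mk' G.divOf (G.divOf_add)

lemma divHom_apply (G : Multigraph) (f : G.V → ℤ) : G.divHom f = G.divOf f := rfl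

lemma T_eq (G : Multigraph) (v : G.V) : G.T v = - G.divOf (Pi.single v 1) := by
  funext w
  simp only [T, inter, Pi.neg_apply, divOf, valency, numLoops, numEdges]
  by_cases h : v = w
  · subst h
    rw [if_pos rfl, Finset.card_filter]
    push_cast
    rw [Finset.mul_sum, ← Finset.sum_neg_distrib, ← Finset.sum_neg_distrib,
      ← Finset.sum_add_distrib]
    refine Finset.sum_congr rfl fun e _ => ?_
    rcases hh : G.ends e with ⟨a, b⟩
    by_cases h1 : a = v <;> by_cases h2 : b = v <;> simp [h1, h2, Pi.single_apply]
  · rw [if_neg h, Finset.card_filter]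
    push_cast
    rw [← Finset.sum_neg_distrib]
    refine Finset.sum_congr rfl fun e _ => ?_
    rcases hh : G.ends e with ⟨a, b⟩
    have h' : w ≠ v := fun x => h x.symm
    by_cases h1 : a = v
    · subst h1
      by_cases h2 : b = w
      · subst h2
        simp [Pi.single_apply, h, h']
      · simp [h2, h]
    · by_cases h2 : b = v
      · subst h2
        by_cases h3 : a = w
        · subst h3
          simp [Pi.single_apply, h, h']
        · simp [h3, h]
      · simp [Pi.single_apply, h1, h2, h']

lemma mem_Prin (G : Multigraph) (D : G.V → ℤ) : D ∈ G.Prin ↔ ∃ f, D = G.divOf f := by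
  constructor
  · intro hD
    have : G.Prin ≤ G.divHom.range := by
      rw [Prin, AddSubgroup.closure_le]
      rintro _ ⟨v, rfl⟩
      refine ⟨-(Pi.single v 1), ?_⟩
      rw [map_neg, T_eq]; rfl
    obtain ⟨f, hf⟩ := this hD
    exact ⟨f, hf.symm⟩
  · rintro ⟨f, rfl⟩
    rw [← divHom_apply]
    have hf : f = ∑ v, f v • (Pi.single v (1 : ℤ) : G.V → ℤ) := by
      funext w
      simp [Finset.sum_apply, Pi.single_apply]
    rw [hf, map_sum]
    refine AddSubgroup.sum_mem _ fun v _ => ?_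
    rw [map_zsmul]
    refine AddSubgroup.zsmul_mem _ ?_ _
    rw [← AddSubgroup.neg_mem_iff, divHom_apply, ← T_eq]
    exact AddSubgroup.subset_closure ⟨v, rfl⟩

lemma pairing (G : Multigraph) (f h : G.V → ℤ) : ∑ v, G.divOf f v * h v =
    ∑ e, (f (G.ends e).1 - f (G.ends e).2) * (h (G.ends e).1 - h (G.ends e).2) := by
  simp only [divOf, Finset.sum_mul]
  rw [Finset.sum_comm]
  refine Finset.sum_congr rfl fun e _ => ?_
  simp only [add_mul, ite_mul, zero_mul, Finset.sum_add_distrib, Finset.sum_ite_eq,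
    Finset.mem_univ, if_true]
  ring

lemma pairing_comm (G : Multigraph) (f h : G.V → ℤ) : ∑ v, G.divOf f v * h v =
    ∑ v, G.divOf h v * f v := by
  rw [pairing, pairing]
  exact Finset.sum_congr rfl fun e _ => mul_comm _ _

lemma degree_divOf (G : Multigraph) (f : G.V → ℤ) : degree (G.divOf f) = 0 := by
  have := G.pairing f (fun _ => 1)
  simpa [degree] using this

/-- Balls around `q`. -/
def reach (G : Multigraph) (q : G.V) : ℕ → G.V → Prop
  | 0 => fun v => v = q
  | n + 1 => fun v => ∃ w, G.reach q n w ∧ G.Adj w v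

lemma exists_level (G : Multigraph) (hG : G.Connected) (q : G.V) :
    ∃ d : G.V → ℕ, d q = 0 ∧ ∀ v, v ≠ q → ∃ w, G.Adj w v ∧ d w < d v := by
  classical
  have hex : ∀ v, ∃ n, G.reach q n v := by
    intro v
    induction hG.2 q v with
    | refl => exact ⟨0, rfl⟩
    | tail _ h ih => obtain ⟨n, hn⟩ := ih; exact ⟨n + 1, _, hn, h⟩
  refine ⟨fun v => Nat.find (hex v), ?_, ?_⟩
  · simp [reach]
  · intro v hv
    have hs := Nat.find_spec (hex v)
    rcases hn : Nat.find (hex v) with _ | n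
    · rw [hn] at hs; exact absurd hs hv
    · rw [hn] at hs
      obtain ⟨w, hw, ha⟩ := hs
      refine ⟨w, ha, ?_⟩
      have := Nat.find_min' (hex w) hw
      simp only [hn]
      omega

lemma exists_potential (G : Multigraph) (hG : G.Connected) (q : G.V) :
    ∃ h : G.V → ℤ, h q = 0 ∧ (∀ v, 0 ≤ h v) ∧ ∀ v, v ≠ q → 1 ≤ G.divOf h v := by
  classical
  obtain ⟨d, hd0, hd⟩ := G.exists_level hG q
  set N := ∑ v, d v with hN
  have hdN : ∀ v, d v ≤ N := fun v =>
    Finset.single_le_sum (f := d) (fun _ _ => Nat.zero_le _) (Finset.mem_univ v)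
  set M : ℤ := 2 * (Fintype.card G.E : ℤ) + 2 with hM
  have hM1 : 1 ≤ M := by
    have : (0 : ℤ) ≤ Fintype.card G.E := by positivity
    linarith
  refine ⟨fun v => M ^ N - M ^ (N - d v), by simp [hd0], ?_, ?_⟩
  · intro v
    have := pow_le_pow_right₀ hM1 (Nat.sub_le N (d v))
    simp only; linarith
  · intro v hv
    obtain ⟨w, ⟨e0, he0⟩, hw⟩ := hd v hv
    set P := M ^ (N - d v) with hP
    have hP1 : 1 ≤ P := one_le_pow₀ hM1
    have hgain : M * P ≤ M ^ (N - d w) := by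
      rw [hP, ← pow_succ']
      apply pow_le_pow_right₀ hM1
      have := hdN v
      omega
    have hpos : ∀ u, 0 ≤ M ^ (N - d u) := fun u => by positivity
    have hlow : ∀ e ∈ (Finset.univ : Finset G.E), (if e = e0 then M * P else 0) - 2 * P ≤
        ((if (G.ends e).1 = v then (M ^ N - M ^ (N - d v)) - (M ^ N - M ^ (N - d (G.ends e).2)) else 0)
            + (if (G.ends e).2 = v then (M ^ N - M ^ (N - d v)) - (M ^ N - M ^ (N - d (G.ends e).1)) else 0)) := by
      intro e _
      rw [← hP]
      have hp1 := hpos (G.ends e).1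
      have hp2 := hpos (G.ends e).2
      by_cases he : e = e0
      · subst he
        rw [if_pos rfl]
        rcases he0 with h | h
        · rw [h] at hp1 hp2 ⊢
          simp only at hp1 hp2 ⊢
          split_ifs <;> linarith
        · rw [h] at hp1 hp2 ⊢
          simp only at hp1 hp2 ⊢
          split_ifs <;> linarith
      · rw [if_neg he]
        split_ifs <;> linarith
    have := Finset.sum_le_sum hlow
    rw [Finset.sum_sub_distrib] at this
    simp only [Finset.sum_ite_eq', Finset.mem_univ, if_true, Finset.sum_const, Finset.card_univ,
      nsmul_eq_mul] at this
    simp only [divOf]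
    refine le_trans ?_ this
    rw [hM]
    nlinarith

lemma burn (G : Multigraph) (q : G.V) (D : G.V → ℤ)
    (hred : ∀ A : Finset G.V, A.Nonempty → q ∉ A →
      ∃ v ∈ A, D v < G.divOf (fun u => if u ∈ A then 1 else 0) v) :
    ∀ n : ℕ, ∀ A : Finset G.V, A.card = n → q ∉ A → ∑ v ∈ A, (D v + 1) ≤
      ∑ e : G.E, (if (G.ends e).1 ∈ A ∨ (G.ends e).2 ∈ A then (1 : ℤ) else 0) := by
  intro n
  induction n with
  | zero =>
    intro A hA _
    rw [Finset.card_eq_zero] at hA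
    subst hA
    simp
  | succ n ih =>
    intro A hA hq
    have hne : A.Nonempty := by rw [← Finset.card_pos]; omega
    obtain ⟨v, hv, hlt⟩ := hred A hne hq
    have h1 := ih (A.erase v) (by rw [Finset.card_erase_of_mem hv]; omega)
      (fun h => hq (Finset.mem_of_mem_erase h))
    rw [← Finset.add_sum_erase A _ hv]
    refine le_trans (add_le_add (Int.add_one_le_of_lt hlt) h1) ?_
    rw [divOf, ← Finset.sum_add_distrib]
    refine Finset.sum_le_sum fun e _ => ?_
    rcases G.ends e with ⟨a, b⟩
    simp only [Finset.mem_erase]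
    by_cases ha : a = v <;> by_cases hb : b = v <;> by_cases ha' : a ∈ A <;>
      by_cases hb' : b ∈ A <;> simp_all

lemma exists_effective (G : Multigraph) (hG : G.Connected) (D : G.V → ℤ)
    (hD : G.genus ≤ degree D) : ∃ F : G.V → ℤ, Effective F ∧ D - F ∈ G.Prin := by
  classical
  obtain ⟨q⟩ := hG.1
  obtain ⟨h, hq, hpos, hlap⟩ := G.exists_potential hG q
  -- the values of the potential on admissible `f`
  let P : ℤ → Prop := fun z => ∃ f : G.V → ℤ, (∀ v, v ≠ q → G.divOf f v ≤ D v) ∧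
    ∑ v, G.divOf h v * f v = z
  have hb : ∃ b : ℤ, ∀ z, P z → z ≤ b := by
    refine ⟨∑ v, D v * h v, ?_⟩
    rintro z ⟨f, hf, rfl⟩
    rw [pairing_comm]
    refine Finset.sum_le_sum fun v _ => ?_
    by_cases hv : v = q
    · subst hv; simp [hq]
    · exact mul_le_mul_of_nonneg_right (hf v hv) (hpos v)
  have hne : ∃ z, P z := by
    refine ⟨_, fun v => -(∑ u, |D u|) * h v, ?_, rfl⟩
    intro v hv
    rw [divOf_smul]
    have h1 := hlap v hv
    have h2 : |D v| ≤ ∑ u, |D u| :=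
      Finset.single_le_sum (f := fun u => |D u|) (fun _ _ => abs_nonneg _) (Finset.mem_univ v)
    have h3 := neg_abs_le (D v)
    have h4 := abs_nonneg (D v)
    nlinarith
  obtain ⟨z, ⟨f, hf, hz⟩, hmax⟩ := Int.exists_greatest_of_bdd hb hne
  have hred : ∀ A : Finset G.V, A.Nonempty → q ∉ A →
      ∃ v ∈ A, (D - G.divOf f) v < G.divOf (fun u => if u ∈ A then 1 else 0) v := by
    intro A hA hqA
    by_contra hcon
    push Not at hcon
    have hP : P (z + ∑ v ∈ A, G.divOf h v) := by
      refine ⟨f + fun u => if u ∈ A then 1 else 0, ?_, ?_⟩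
      · intro v hv
        rw [divOf_add, Pi.add_apply]
        by_cases hvA : v ∈ A
        · have := hcon v hvA
          rw [Pi.sub_apply] at this
          linarith
        · have h0 : G.divOf (fun u => if u ∈ A then 1 else 0) v ≤ 0 := by
            refine Finset.sum_nonpos fun e _ => ?_
            simp only [if_neg hvA]
            split_ifs <;> simp
          have := hf v hv
          linarith
      · simp only [Pi.add_apply, mul_add, Finset.sum_add_distrib, hz]
        simp
    have := hmax _ hP
    have h1 : ∑ v ∈ A, (1 : ℤ) ≤ ∑ v ∈ A, G.divOf h v :=
      Finset.sum_le_sum fun v hv => hlap v (fun hh => hqA (hh ▸ hv))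
    have h2 := hA.card_pos
    simp at h1
    omega
  refine ⟨D - G.divOf f, ?_, ?_⟩
  · intro v
    by_cases hv : v = q
    · subst hv
      have h1 := G.burn v _ hred _ (Finset.univ.erase v) rfl (by simp)
      have h2 : ∑ e : G.E, (if (G.ends e).1 ∈ Finset.univ.erase v ∨
          (G.ends e).2 ∈ Finset.univ.erase v then (1 : ℤ) else 0) ≤ Fintype.card G.E := by
        refine le_trans (Finset.sum_le_sum (g := fun _ => (1 : ℤ)) fun e _ => ?_) (by simp)
        split_ifs <;> simp
      have h3 : degree (D - G.divOf f) = degree D := by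
        have := G.degree_divOf f
        simp only [degree, Pi.sub_apply, Finset.sum_sub_distrib] at this ⊢
        linarith
      have h4 : degree (D - G.divOf f) + Fintype.card G.V = ((D - G.divOf f) v + 1) +
          ∑ u ∈ Finset.univ.erase v, ((D - G.divOf f) u + 1) := by
        rw [Finset.add_sum_erase _ (fun u => (D - G.divOf f) u + 1) (Finset.mem_univ v),
          Finset.sum_add_distrib]
        simp [degree]
      rw [genus] at hD
      linarith
    · have := hf v hv
      simp only [Pi.sub_apply]; linarith
  · rw [mem_Prin]
    exact ⟨f, by simp⟩

lemma exists_nonspecial (G : Multigraph) (hne : Nonempty G.V) (hl : G.Loopless) :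
    ∃ ν : G.V → ℤ, degree ν = G.genus - 1 ∧
      ∀ F : G.V → ℤ, Effective F → ν - F ∉ G.Prin := by
  classical
  let o := Fintype.equivFin G.V
  let top : G.E → G.V := fun e =>
    if o (G.ends e).1 < o (G.ends e).2 then (G.ends e).2 else (G.ends e).1
  refine ⟨fun v => (∑ e, if top e = v then 1 else 0) - 1, ?_, ?_⟩
  · simp only [degree, Finset.sum_sub_distrib]
    rw [Finset.sum_comm]
    simp [genus]
  · intro F hF hP
    rw [mem_Prin] at hP
    obtain ⟨f, hf⟩ := hP
    obtain ⟨v0, -, hv0⟩ := Finset.exists_max_image Finset.univ f ⟨hne.some, Finset.mem_univ _⟩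
    obtain ⟨v, hv, hvmin⟩ := Finset.exists_min_image (Finset.univ.filter fun v => f v = f v0) o
      ⟨v0, by simp⟩
    simp only [Finset.mem_filter, Finset.mem_univ, true_and] at hv hvmin
    have hmax : ∀ u, f u ≤ f v := fun u => by rw [hv]; exact hv0 u (Finset.mem_univ _)
    have hlt : ∀ u, o u < o v → f u + 1 ≤ f v := by
      intro u hu
      have h1 := hmax u
      have h2 : f u ≠ f v := fun h => absurd (hvmin u (h.trans hv)) (not_le.2 hu)
      omega
    have h1 := congrFun hf v
    have h2 := hF v
    have h3 : (∑ e, if top e = v then (1 : ℤ) else 0) ≤ G.divOf f v := by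
      refine Finset.sum_le_sum fun e _ => ?_
      have hle := hl e
      have e1 := hmax (G.ends e).1
      have e2 := hmax (G.ends e).2
      have l1 := hlt (G.ends e).1
      have l2 := hlt (G.ends e).2
      by_cases hlo : o (G.ends e).1 < o (G.ends e).2
      · have ht : top e = (G.ends e).2 := if_pos hlo
        rw [ht]
        by_cases ha : (G.ends e).2 = v
        · rw [← ha] at l1 ⊢
          have := l1 hlo
          simp only [if_true, if_neg hle]
          linarith
        · rw [if_neg ha]
          split_ifs <;> linarith
      · have ht : top e = (G.ends e).1 := if_neg hlo
        rw [ht]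
        by_cases ha : (G.ends e).1 = v
        · have hlo' : o (G.ends e).2 < o (G.ends e).1 :=
            lt_of_le_of_ne (not_lt.1 hlo) (fun h => hle (o.injective h).symm)
          rw [← ha] at l2 ⊢
          have := l2 hlo'
          simp only [if_true, if_neg (Ne.symm hle)]
          linarith
        · rw [if_neg ha]
          split_ifs <;> linarith
    simp only [Pi.sub_apply] at h1
    linarith

lemma degree_sub {α : Type} [Fintype α] (A B : α → ℤ) :
    degree (A - B) = degree A - degree B := by
  simp [degree]

lemma degree_add {α : Type} [Fintype α] (A B : α → ℤ) :
    degree (A + B) = degree A + degree B := by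
  simp [degree, Finset.sum_add_distrib]

lemma degree_nonneg {α : Type} [Fintype α] (A : α → ℤ) (h : Effective A) : 0 ≤ degree A :=
  Finset.sum_nonneg fun v _ => h v

lemma degree_prin (G : Multigraph) (A : G.V → ℤ) (h : A ∈ G.Prin) : degree A = 0 := by
  obtain ⟨f, rfl⟩ := (G.mem_Prin A).1 h
  exact G.degree_divOf f

lemma genus_nonneg (G : Multigraph) (hG : G.Connected) : 0 ≤ G.genus := by
  obtain ⟨q⟩ := hG.1
  have hd : degree (Pi.single q G.genus : G.V → ℤ) = G.genus := by simp [degree]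
  obtain ⟨F, hF, hP⟩ := G.exists_effective hG (Pi.single q G.genus) hd.ge
  have h1 := G.degree_prin _ hP
  rw [degree_sub, hd] at h1
  have := degree_nonneg F hF
  omega

theorem riemann_loopless (G : Multigraph) (hG : G.Connected) (hl : G.Loopless)
    (D : G.V → ℤ) (hD : 2 * G.genus - 1 ≤ degree D) : G.rank D = degree D - G.genus := by
  have hg := G.genus_nonneg hG
  obtain ⟨q⟩ := hG.1
  apply IsGreatest.csSup_eq
  constructor
  · by_cases hk : degree D - G.genus = -1
    · exact Or.inl hk
    · refine Or.inr ⟨by omega, fun E _ hE => ?_⟩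
      exact G.exists_effective hG _ (by rw [degree_sub]; omega)
  · intro r hr
    by_contra hcon
    push Not at hcon
    rcases hr with rfl | ⟨hr0, hr⟩
    · omega
    obtain ⟨ν, hν, hns⟩ := G.exists_nonspecial hG.1 hl
    obtain ⟨E, hE, hP⟩ := G.exists_effective hG (D - ν) (by rw [degree_sub]; omega)
    have hdE := G.degree_prin _ hP
    rw [degree_sub, degree_sub] at hdE
    have hS : Effective (Pi.single q (r - degree E) : G.V → ℤ) := by
      intro v
      by_cases h : v = q
      · subst h; simp; omega
      · simp [h]
    obtain ⟨F, hF, hP2⟩ := hr (E + Pi.single q (r - degree E))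
      (fun v => add_nonneg (hE v) (hS v)) (by rw [degree_add]; simp [degree])
    refine hns (F + Pi.single q (r - degree E)) (fun v => add_nonneg (hF v) (hS v)) ?_
    have := G.Prin.sub_mem hP2 hP
    convert this using 1
    abel

lemma Adj.symm' {G : Multigraph} {v w : G.V} (h : G.Adj v w) : G.Adj w v := by
  obtain ⟨e, he⟩ := h
  exact ⟨e, he.symm⟩

lemma subdivide_connected (G : Multigraph) (n : G.E → ℕ) (hG : G.Connected) :
    (G.subdivide n).Connected := by
  have hsymm : ∀ {x y}, Relation.ReflTransGen (G.subdivide n).Adj x y →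
      Relation.ReflTransGen (G.subdivide n).Adj y x := by
    intro x y h
    induction h with
    | refl => exact Relation.ReflTransGen.refl
    | tail _ h ih => exact Relation.ReflTransGen.head (Adj.symm' h) ih
  have hedge : ∀ x : (G.subdivide n).E, Relation.ReflTransGen (G.subdivide n).Adj
      ((G.subdivide n).ends x).1 ((G.subdivide n).ends x).2 :=
    fun x => Relation.ReflTransGen.single ⟨x, Or.inl rfl⟩
  have hfirst : ∀ (e : G.E) (i : ℕ) (hi : i < n e + 1),
      Relation.ReflTransGen (G.subdivide n).Adj (Sum.inl (G.ends e).1)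
      ((G.subdivide n).ends ⟨e, ⟨i, hi⟩⟩).1 := by
    intro e i
    induction i with
    | zero => intro hi; simp only [subdivide, dite_true]; exact Relation.ReflTransGen.refl
    | succ i ih =>
      intro hi
      have h1 := (ih (by omega)).trans (hedge ⟨e, ⟨i, by omega⟩⟩)
      have h2 : ((G.subdivide n).ends ⟨e, ⟨i + 1, hi⟩⟩).1 =
          ((G.subdivide n).ends ⟨e, ⟨i, by omega⟩⟩).2 := by
        have : i ≠ n e := by omega
        simp [subdivide, this]
      rw [h2]; exact h1
  have hstep : ∀ e : G.E, Relation.ReflTransGen (G.subdivide n).Adj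
      (Sum.inl (G.ends e).1) (Sum.inl (G.ends e).2) := by
    intro e
    have h1 := (hfirst e (n e) (by omega)).trans (hedge ⟨e, ⟨n e, by omega⟩⟩)
    have h2 : ((G.subdivide n).ends ⟨e, ⟨n e, by omega⟩⟩).2 = Sum.inl (G.ends e).2 := by
      simp [subdivide]
    rw [h2] at h1; exact h1
  have hinl : ∀ v w : G.V, Relation.ReflTransGen (G.subdivide n).Adj
      (Sum.inl v) (Sum.inl w) := by
    intro v w
    induction hG.2 v w with
    | refl => exact Relation.ReflTransGen.refl
    | tail _ h ih =>
      obtain ⟨e, he⟩ := h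
      have := hstep e
      rcases he with he | he <;> rw [he] at this
      · exact ih.trans this
      · exact ih.trans (hsymm this)
  obtain ⟨q⟩ := hG.1
  have hall : ∀ x : (G.subdivide n).V, Relation.ReflTransGen (G.subdivide n).Adj
      (Sum.inl q) x := by
    rintro (v | ⟨e, i⟩)
    · exact hinl q v
    · have h1 := (hinl q (G.ends e).1).trans (hfirst e (i + 1) (by omega))
      have h2 : ((G.subdivide n).ends ⟨e, ⟨i + 1, by omega⟩⟩).1 = Sum.inr ⟨e, i⟩ := by
        simp [subdivide]
      rw [h2] at h1; exact h1
  exact ⟨⟨Sum.inl q⟩, fun x y => (hsymm (hall x)).trans (hall y)⟩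

lemma subdivide_genus (G : Multigraph) (n : G.E → ℕ) : (G.subdivide n).genus = G.genus := by
  have hE : Fintype.card (G.subdivide n).E = Fintype.card (Σ e : G.E, Fin (n e + 1)) :=
    Fintype.card_congr (Equiv.refl _)
  have hV : Fintype.card (G.subdivide n).V = Fintype.card (G.V ⊕ (Σ e : G.E, Fin (n e))) :=
    Fintype.card_congr (Equiv.refl _)
  rw [genus, genus, hE, hV]
  simp [Fintype.card_sigma, Finset.sum_add_distrib]
  ring

lemma subdivMap_degree (G : Multigraph) (n : G.E → ℕ) (D : G.V → ℤ) :
    degree (G.subdivMap n D) = degree D := by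
  have : degree (G.subdivMap n D) = ∑ x : G.V ⊕ (Σ e : G.E, Fin (n e)), Sum.elim D 0 x := rfl
  rw [this, Fintype.sum_sum_type]
  simp [degree]

lemma hat_loopless (G : Multigraph) : G.hat.Loopless := by
  rintro ⟨e, i, hi⟩
  by_cases h : (G.ends e).1 = (G.ends e).2
  · simp only [h, if_true] at hi
    interval_cases i <;> simp [hat, subdivide, h]
  · simp only [h, if_false] at hi
    interval_cases i
    simp [hat, subdivide, h]

end Multigraph

open Multigraph in
/-- Riemann's theorem for graphs with loops.  For a connected graph
`G` of genus `g`, if `deg D ≥ 2g - 1` then `r#_G(D) = deg D - g`. -/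
theorem riemann_theorem_graph_with_loops (G : Multigraph) (hG : G.Connected)
    (D : G.V → ℤ) (hD : 2 * G.genus - 1 ≤ Multigraph.degree D) :
    G.rankSharp D = Multigraph.degree D - G.genus := by
  rw [rankSharp, ← G.subdivide_genus (fun e => if (G.ends e).1 = (G.ends e).2 then 1 else 0),
    ← G.subdivMap_degree (fun e => if (G.ends e).1 = (G.ends e).2 then 1 else 0) D]
  refine riemann_loopless G.hat (G.subdivide_connected _ hG) G.hat_loopless _ ?_
  exact hD.trans_eq' (by rw [hat, subdivide_genus]) |>.trans_eq (subdivMap_degree _ _ _).symm
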